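/- For every constraint f having imp support, there exists an imp-distinctive factor list for R_f. -/

import Mathlib

/-- A (complex-valued Boolean) constraint of arity `k`. -/
abbrev Constraint (k : ℕ) : Type := (Fin k → Bool) → ℂ

/-- The binary equality constraint `EQ = [1,0,1]`, as a two-argument function. -/
def EQc : Bool → Bool → ℂ := fun a b => if a = b then 1 else 0

/-- The binary disequality constraint `XOR = [0,1,0]`, as a two-argument function. -/
def XORc : Bool → Bool → ℂ := fun a b => if a = b then 0 else 1

/-- The binary constraint `Implies = (1,1,0,1)`, as a two-argument function. -/
def IMPc : Bool → Bool → ℂ := fun a b => if a = true ∧ b = false then 0 else 1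

/-- The unary constraint `[a, b]` (value `a` on input `0`, value `b` on input `1`). -/
def unC (a b : ℂ) : Constraint 1 := fun x => if x 0 then b else a

/-- The binary constraint `(a,b,c,d) = (f(0,0), f(0,1), f(1,0), f(1,1))`. -/
def binC (a b c d : ℂ) : Constraint 2 := fun x =>
  if x 0 then (if x 1 then d else c) else (if x 1 then b else a)

/-- `OR = [0,1,1]`. -/
def ORc : Constraint 2 := binC 0 1 1 1

/-- `Implies = (1,1,0,1)` as a binary constraint. -/
def Impliesc : Constraint 2 := binC 1 1 0 1

/-- Membership in `NZ`: the constraint is everywhere nonzero. -/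
def inNZ {k : ℕ} (f : Constraint k) : Prop := ∀ x, f x ≠ 0

/-- Membership in `DG`: the constraint is a product of unary constraints, one per variable. -/
def inDG {k : ℕ} (f : Constraint k) : Prop :=
  ∃ g : Fin k → Bool → ℂ, ∀ x, f x = ∏ i, g i (x i)

/-- Membership in `ED`: the constraint is a product of at least one factor, each factor
being a unary constraint applied to some variable, or `EQ`/`XOR` applied to two variables. -/
def inED {k : ℕ} (f : Constraint k) : Prop :=
  ∃ (l1 l2 : ℕ) (h : Fin l1 → Bool → ℂ) (j : Fin l1 → Fin k)
    (g : Fin l2 → Bool → Bool → ℂ) (m n : Fin l2 → Fin k),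
    1 ≤ l1 + l2 ∧ (∀ i, g i = EQc ∨ g i = XORc) ∧
    ∀ x, f x = (∏ i, h i (x (j i))) * ∏ i, g i (x (m i)) (x (n i))

/-- Membership in `IM`: `f ∉ NZ` and `f` is a product of at least one factor, each factor
being a unary constraint applied to some variable, or `Implies` applied to two variables. -/
def inIM {k : ℕ} (f : Constraint k) : Prop :=
  ¬ inNZ f ∧
  ∃ (l1 l2 : ℕ) (h : Fin l1 → Bool → ℂ) (j : Fin l1 → Fin k)
    (m n : Fin l2 → Fin k),
    1 ≤ l1 + l2 ∧
    ∀ x, f x = (∏ i, h i (x (j i))) * ∏ i, IMPc (x (m i)) (x (n i))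

/-- The underlying relation `R_f = {x : f x ≠ 0}` of a constraint `f`. -/
def relOf {k : ℕ} (f : Constraint k) : Set (Fin k → Bool) := {x | f x ≠ 0}

/-- Factors allowed in an IMP-style factorization of a relation:
`Δ_c(x_i)` or `Implies(x_i, x_j)`. -/
inductive ImpFactor (k : ℕ) where
  | delta (c : Bool) (i : Fin k)
  | imp (i j : Fin k)
deriving DecidableEq

/-- Evaluation of an IMP-factor at an assignment. -/
def ImpFactor.eval {k : ℕ} : ImpFactor k → (Fin k → Bool) → Bool
  | .delta c i, x => x i == c
  | .imp i j, x => !(x i) || x j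

/-- `L` is a factor list for the relation `R`: the conjunction of the factors in `L` equals `R`. -/
def isFactorListFor {k : ℕ} (L : List (ImpFactor k)) (R : Set (Fin k → Bool)) : Prop :=
  ∀ x, x ∈ R ↔ ∀ fac ∈ L, fac.eval x = true

/-- Membership in `IMP`: the relation is the conjunction of a positive number of factors of the
forms `Δ_0(x)`, `Δ_1(x)`, `Implies(x,y)`. -/
def inIMP {k : ℕ} (R : Set (Fin k → Bool)) : Prop :=
  ∃ L : List (ImpFactor k), L ≠ [] ∧ isFactorListFor L R

/-- `f` has imp support when `R_f ∈ IMP`. -/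
def hasImpSupport {k : ℕ} (f : Constraint k) : Prop := inIMP (relOf f)

/-- A factor list is imp-distinctive if no variable occurs both in a `Δ_c` factor and in an
`Implies` factor, and no factor `Implies(x,x)` occurs. -/
def impDistinctive {k : ℕ} (L : List (ImpFactor k)) : Prop :=
  (∀ i : Fin k, ¬ ((∃ c, ImpFactor.delta c i ∈ L) ∧
      (∃ j, ImpFactor.imp i j ∈ L ∨ ImpFactor.imp j i ∈ L))) ∧
  (∀ i : Fin k, ImpFactor.imp i i ∉ L)

/-- Factors of the forms `Δ_c(x_i)` or `EQ(x_i,x_j)`. -/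
inductive EqFactor (k : ℕ) where
  | delta (c : Bool) (i : Fin k)
  | eq (i j : Fin k)
deriving DecidableEq

/-- Evaluation of such a factor at an assignment. -/
def EqFactor.eval {k : ℕ} : EqFactor k → (Fin k → Bool) → Bool
  | .delta c i, x => x i == c
  | .eq i j, x => x i == x j

/-- `f` is in simple form: its representing Boolean matrix (rows indexed by `R_f`) has
no all-`0` column, no all-`1` column, and no two identical columns. -/
def simpleForm {k : ℕ} (f : Constraint k) : Prop :=
  (∀ i : Fin k, ∃ a, f a ≠ 0 ∧ a i = true) ∧
  (∀ i : Fin k, ∃ a, f a ≠ 0 ∧ a i = false) ∧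
  (∀ i j : Fin k, i ≠ j → ∃ a, f a ≠ 0 ∧ a i ≠ a j)

/-- A constraint of unspecified arity. -/
abbrev Ctr : Type := Σ k : ℕ, Constraint k

/-- T-constructibility of a constraint from a set `G` of constraints, by finitely many
applications of permutation, pinning, projection, linking, expansion, multiplication,
and normalization. -/
inductive TCon (G : Set Ctr) : Ctr → Prop where
  | base {c : Ctr} : c ∈ G → TCon G c
  | perm {k : ℕ} {g : Constraint k} (σ : Equiv.Perm (Fin k)) :
      TCon G ⟨k, g⟩ → TCon G ⟨k, fun x => g (fun i => x (σ i))⟩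
  | pinning {k : ℕ} {g : Constraint (k+1)} (i : Fin (k+1)) (c : Bool) :
      TCon G ⟨k+1, g⟩ → TCon G ⟨k, fun x => g (i.insertNth c x)⟩
  | proj {k : ℕ} {g : Constraint (k+1)} (i : Fin (k+1)) :
      TCon G ⟨k+1, g⟩ →
      TCon G ⟨k, fun x => g (i.insertNth false x) + g (i.insertNth true x)⟩
  | link {k : ℕ} {g : Constraint (k+1)} (i : Fin (k+1)) (j : Fin k) :
      TCon G ⟨k+1, g⟩ → TCon G ⟨k, fun x => g (i.insertNth (x j) x)⟩
  | expand {k : ℕ} {g : Constraint k} (i : Fin (k+1)) :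
      TCon G ⟨k, g⟩ → TCon G ⟨k+1, fun x => g (fun j => x (i.succAbove j))⟩
  | mul {k : ℕ} {g₁ g₂ : Constraint k} :
      TCon G ⟨k, g₁⟩ → TCon G ⟨k, g₂⟩ → TCon G ⟨k, fun x => g₁ x * g₂ x⟩
  | norm {k : ℕ} {g : Constraint k} (lam : ℂ) (hlam : lam ≠ 0) :
      TCon G ⟨k, g⟩ → TCon G ⟨k, fun x => lam * g x⟩

/-- T-constructibility using no projection operation. -/
inductive TConNoProj (G : Set Ctr) : Ctr → Prop where
  | base {c : Ctr} : c ∈ G → TConNoProj G c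
  | perm {k : ℕ} {g : Constraint k} (σ : Equiv.Perm (Fin k)) :
      TConNoProj G ⟨k, g⟩ → TConNoProj G ⟨k, fun x => g (fun i => x (σ i))⟩
  | pinning {k : ℕ} {g : Constraint (k+1)} (i : Fin (k+1)) (c : Bool) :
      TConNoProj G ⟨k+1, g⟩ → TConNoProj G ⟨k, fun x => g (i.insertNth c x)⟩
  | link {k : ℕ} {g : Constraint (k+1)} (i : Fin (k+1)) (j : Fin k) :
      TConNoProj G ⟨k+1, g⟩ → TConNoProj G ⟨k, fun x => g (i.insertNth (x j) x)⟩
  | expand {k : ℕ} {g : Constraint k} (i : Fin (k+1)) :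
      TConNoProj G ⟨k, g⟩ → TConNoProj G ⟨k+1, fun x => g (fun j => x (i.succAbove j))⟩
  | mul {k : ℕ} {g₁ g₂ : Constraint k} :
      TConNoProj G ⟨k, g₁⟩ → TConNoProj G ⟨k, g₂⟩ →
      TConNoProj G ⟨k, fun x => g₁ x * g₂ x⟩
  | norm {k : ℕ} {g : Constraint k} (lam : ℂ) (hlam : lam ≠ 0) :
      TConNoProj G ⟨k, g⟩ → TConNoProj G ⟨k, fun x => lam * g x⟩

/-- Pinning the `i`-th variable of `f` to the bit `c`. -/
def pinC {k : ℕ} (f : Constraint (k+1)) (i : Fin (k+1)) (c : Bool) : Constraint k :=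
  fun x => f (i.insertNth c x)

/-- `R_f` admits a good factor list: a factor list consisting only of `Implies` factors,
in which every variable is incident to at least one edge of the induced imp graph,
and whose imp graph has no (directed) cycle. -/
def hasGoodFactorList {k : ℕ} (f : Constraint k) : Prop :=
  ∃ L : List (ImpFactor k),
    isFactorListFor L (relOf f) ∧
    (∀ fac ∈ L, ∃ i j, fac = ImpFactor.imp i j) ∧
    (∀ i : Fin k, ∃ j, ImpFactor.imp i j ∈ L ∨ ImpFactor.imp j i ∈ L) ∧
    ¬ ∃ i : Fin k, Relation.TransGen (fun a b => ImpFactor.imp a b ∈ L) i i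

/-- For every constraint `f` having imp support, there exists an
imp-distinctive factor list for `R_f`. -/
theorem stmt13 (k : ℕ) (f : Constraint k) (hf : hasImpSupport f) :
    ∃ L : List (ImpFactor k), isFactorListFor L (relOf f) ∧ impDistinctive L := by
  classical
  obtain ⟨L, -, hL⟩ := hf
  generalize relOf f = R at hL ⊢
  let P : Fin k → Bool → Prop := fun i c => ∀ x ∈ R, x i = c
  let Q : ImpFactor k → Prop := fun fac => match fac with
    | .delta c i => P i c
    | .imp i j => ImpFactor.imp i j ∈ L ∧ i ≠ j ∧ (∀ c, ¬ P i c) ∧ (∀ c, ¬ P j c)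
  let all : List (ImpFactor k) :=
    (List.finRange k).map (ImpFactor.delta false) ++
      (List.finRange k).map (ImpFactor.delta true) ++ L
  have hmem : ∀ fac, fac ∈ all.filter (fun a => decide (Q a)) ↔ Q fac := by
    intro fac
    rw [List.mem_filter, decide_eq_true_iff]
    refine ⟨fun h => h.2, fun h => ⟨?_, h⟩⟩
    cases fac with
    | delta c i => cases c <;> simp [all]
    | imp i j =>
      have h1 : ImpFactor.imp i j ∈ L := h.1
      simp [all, h1]
  refine ⟨all.filter (fun a => decide (Q a)), ?_, ?_, ?_⟩
  · intro x
    constructor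
    · intro hx fac hfac
      rw [hmem] at hfac
      cases fac with
      | delta c i =>
        have h : P i c := hfac
        simp [ImpFactor.eval, h x hx]
      | imp i j => exact (hL x).1 hx _ hfac.1
    · intro h
      have hP : ∀ i c, P i c → x i = c := by
        intro i c hp
        have := h (ImpFactor.delta c i) ((hmem _).2 hp)
        simpa [ImpFactor.eval] using this
      rw [hL]
      intro fac hfac
      cases fac with
      | delta c i =>
        have hp : P i c := by
          intro y hy
          simpa [ImpFactor.eval] using (hL y).1 hy _ hfac
        simp [ImpFactor.eval, hP i c hp]
      | imp i j =>
        have himp : ∀ y ∈ R, y i = false ∨ y j = true := by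
          intro y hy
          simpa [ImpFactor.eval] using (hL y).1 hy _ hfac
        have goal : x i = false ∨ x j = true := by
          by_cases hij : i = j
          · subst hij
            cases x i <;> simp
          by_cases hi : ∃ c, P i c
          · obtain ⟨c, hc⟩ := hi
            cases c with
            | false => exact Or.inl (hP i _ hc)
            | true =>
              refine Or.inr (hP j _ fun y hy => ?_)
              have h1 := himp y hy
              have h2 := hc y hy
              simpa [h2] using h1
          by_cases hj : ∃ c, P j c
          · obtain ⟨c, hc⟩ := hj
            cases c with
            | true => exact Or.inr (hP j _ hc)
            | false =>
              refine Or.inl (hP i _ fun y hy => ?_)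
              have h1 := himp y hy
              have h2 := hc y hy
              simpa [h2] using h1
          have := h (ImpFactor.imp i j)
            ((hmem _).2 ⟨hfac, hij, not_exists.1 hi, not_exists.1 hj⟩)
          simpa [ImpFactor.eval] using this
        simpa [ImpFactor.eval] using goal
  · rintro i ⟨⟨c, hc⟩, j, hj | hj⟩
    · rw [hmem] at hc hj
      exact hj.2.2.1 c hc
    · rw [hmem] at hc hj
      exact hj.2.2.2 c hc
  · intro i hi
    rw [hmem] at hi
    exact hi.2.1 rfl
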